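/- Let α ∈ RO and let p ≥ 0 be an integer. If H^α(ℝⁿ) embeds continuously into C^p_b(ℝⁿ), then ∫₁^∞ t^{2p+n−1} α(t)^{−2} dt < ∞. -/

import Mathlib

open MeasureTheory FourierTransform



/-- The class RO of RO-varying functions at infinity. -/
def RO (α : ℝ → ℝ) : Prop :=
  Measurable α ∧ (∀ t ≥ (1:ℝ), 0 < α t) ∧
    ∃ b > (1:ℝ), ∃ c ≥ (1:ℝ), ∀ t ≥ (1:ℝ), ∀ l ∈ Set.Icc (1:ℝ) b,
      c⁻¹ ≤ α (l * t) / α t ∧ α (l * t) / α t ≤ c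

/-- The Hörmander weight `ξ ↦ α(⟨ξ⟩)`. -/
noncomputable def wt (α : ℝ → ℝ) {n : ℕ} (ξ : EuclideanSpace ℝ (Fin n)) : ℝ :=
  α (Real.sqrt (1 + ‖ξ‖ ^ 2))


lemma aux_deriv {n p : ℕ} (W : EuclideanSpace ℝ (Fin n) → ℂ) (hW : Measurable W)
    (hint : ∀ k ≤ p, Integrable (fun v => ‖v‖ ^ k * ‖W v‖)) (i : Fin n) :
    ‖∫ v, (((v i) ^ p : ℝ) : ℂ) * W v‖ ≤ ‖iteratedFDeriv ℝ p (𝓕⁻ W) 0‖ := by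
  have hint' : ∀ k : ℕ, (k : ℕ∞) ≤ (p : ℕ∞) → Integrable (fun v => ‖v‖ ^ k * ‖W (-v)‖) := by
    intro k hk
    have := (hint k (by exact_mod_cast hk)).comp_neg
    simpa using this
  have hWm : AEStronglyMeasurable (fun v => W (-v)) :=
    (hW.comp measurable_neg).aestronglyMeasurable
  set e : EuclideanSpace ℝ (Fin n) := EuclideanSpace.single i 1 with he
  have h1 := ContinuousMultilinearMap.le_opNorm (iteratedFDeriv ℝ p (𝓕⁻ W) 0) (fun _ => e)
  have hne : ‖e‖ = 1 := by simp [he]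
  simp only [hne, Finset.prod_const_one, mul_one] at h1
  refine le_trans ?_ h1
  rw [Real.fourierInv_eq_fourier_comp_neg, Real.iteratedFDeriv_fourier hint' hWm le_rfl]
  have hI : Integrable (fun v => VectorFourier.fourierPowSMulRight (innerSL ℝ) (fun v => W (-v)) v p)
      (volume : Measure (EuclideanSpace ℝ (Fin n))) :=
    VectorFourier.integrable_fourierPowSMulRight (innerSL ℝ) (hint' p le_rfl) hWm
  rw [Real.fourier_continuousMultilinearMap_apply hI, Real.fourier_eq]
  simp only [inner_zero_right, neg_zero, AddChar.map_zero_eq_one, one_smul,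
    VectorFourier.fourierPowSMulRight_apply, innerSL_apply_apply ℝ]
  rw [integral_smul, norm_smul]
  have h2 : (∫ v : EuclideanSpace ℝ (Fin n), (∏ _j : Fin p, inner ℝ v e) • W (-v)) =
      ∫ v, (((-v) i ^ p * (-1) ^ p : ℝ) : ℂ) * W (-v) := by
    congr 1; ext v
    simp [he, EuclideanSpace.inner_single_right]
    left
    rw [← mul_pow]; simp
  rw [h2, integral_neg_eq_self (fun v : EuclideanSpace ℝ (Fin n) => (((v i) ^ p * (-1) ^ p : ℝ) : ℂ) * W v)]
  have h3 : (∫ v : EuclideanSpace ℝ (Fin n), (((v i) ^ p * (-1) ^ p : ℝ) : ℂ) * W v) =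
     (-1) ^ p * ∫ v, (((v i) ^ p : ℝ) : ℂ) * W v := by
    rw [← integral_const_mul]; congr 1; ext v; push_cast; ring
  rw [h3, norm_mul]
  have h4 : 1 ≤ ‖(-(2 * Real.pi * Complex.I)) ^ p‖ := by
    rw [norm_pow]
    apply one_le_pow₀
    simp [abs_of_pos Real.pi_pos]
    linarith [Real.pi_gt_three]
  simp only [norm_pow, norm_neg, norm_one, one_pow, one_mul] at h4 ⊢
  exact le_mul_of_one_le_left (norm_nonneg _) h4

lemma aux_coord {n p : ℕ} (α : ℝ → ℝ) (hm : Measurable α) (hpos : ∀ t ≥ (1:ℝ), 0 < α t)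
    (hemb : ∃ C > (0:ℝ), ∀ W : EuclideanSpace ℝ (Fin n) → ℂ, Measurable W →
      Integrable W → Integrable (fun ξ => (wt α ξ) ^ 2 * ‖W ξ‖ ^ 2) →
        ∀ k ≤ p, ∀ x : EuclideanSpace ℝ (Fin n),
          ‖iteratedFDeriv ℝ k (𝓕⁻ W) x‖ ≤
            C * Real.sqrt (∫ ξ, (wt α ξ) ^ 2 * ‖W ξ‖ ^ 2)) (i : Fin n) :
    Integrable (fun ξ : EuclideanSpace ℝ (Fin n) => (ξ i) ^ (2 * p) * ((wt α ξ)⁻¹) ^ 2) := by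
  obtain ⟨C, hC, H⟩ := hemb
  have hwm : Measurable (fun ξ : EuclideanSpace ℝ (Fin n) => wt α ξ) := by
    unfold wt; fun_prop
  have hwpos : ∀ ξ : EuclideanSpace ℝ (Fin n), 0 < wt α ξ := fun ξ =>
    hpos _ (Real.one_le_sqrt.2 (by nlinarith [sq_nonneg ‖ξ‖]))
  have him : Measurable (fun ξ : EuclideanSpace ℝ (Fin n) => ξ i) := by fun_prop
  let S : ℕ → Set (EuclideanSpace ℝ (Fin n)) := fun N =>
    Metric.closedBall 0 N ∩ {ξ | (wt α ξ)⁻¹ ≤ N}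
  have hSm : ∀ N, MeasurableSet (S N) := fun N =>
    measurableSet_closedBall.inter (measurableSet_le hwm.inv measurable_const)
  have hSf : ∀ N, volume (S N) < ⊤ := fun N =>
    (measure_mono Set.inter_subset_left).trans_lt measure_closedBall_lt_top
  have hcov : AECover volume Filter.atTop S := by
    refine ⟨ae_of_all _ fun ξ => ?_, hSm⟩
    have h1 : ∀ᶠ N : ℕ in Filter.atTop, ‖ξ‖ ≤ N :=
      tendsto_natCast_atTop_atTop.eventually_ge_atTop _
    have h2 : ∀ᶠ N : ℕ in Filter.atTop, (wt α ξ)⁻¹ ≤ N :=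
      tendsto_natCast_atTop_atTop.eventually_ge_atTop _
    filter_upwards [h1, h2] with N a b
    exact ⟨by simpa using a, b⟩
  have hco : ∀ ξ : EuclideanSpace ℝ (Fin n), |ξ i| ≤ ‖ξ‖ := fun ξ => by
    simpa using PiLp.norm_apply_le ξ i
  have hbd : ∀ N : ℕ, ∀ f : EuclideanSpace ℝ (Fin n) → ℝ, Measurable f → ∀ K : ℝ,
      (∀ ξ ∈ S N, ‖f ξ‖ ≤ K) → IntegrableOn f (S N) := fun N f hf K hK =>
    IntegrableOn.of_bound (hSf N) hf.aestronglyMeasurable K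
      ((ae_restrict_iff' (hSm N)).2 (ae_of_all _ hK))
  set g : EuclideanSpace ℝ (Fin n) → ℝ := fun ξ => (ξ i) ^ (2 * p) * ((wt α ξ)⁻¹) ^ 2 with hg
  have hg0 : ∀ ξ, 0 ≤ g ξ := fun ξ => mul_nonneg ((even_two_mul p).pow_nonneg _) (sq_nonneg _)
  have hgi : ∀ N, IntegrableOn g (S N) := fun N => by
    refine hbd N g (by rw [hg]; fun_prop) ((N:ℝ) ^ (2 * p) * (N:ℝ) ^ 2) fun ξ hξ => ?_
    have a : ‖ξ‖ ≤ N := by simpa using hξ.1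
    have b : (wt α ξ)⁻¹ ≤ N := hξ.2
    have c : 0 < (wt α ξ)⁻¹ := inv_pos.2 (hwpos ξ)
    rw [hg]
    simp only [norm_mul, norm_pow, Real.norm_eq_abs, abs_of_pos c]
    gcongr
    exact (hco ξ).trans a
  refine hcov.integrable_of_integral_bounded_of_nonneg_ae (C ^ 2) hgi (ae_of_all _ hg0)
    (Filter.Eventually.of_forall fun N => ?_)
  let r : EuclideanSpace ℝ (Fin n) → ℝ := fun ξ => (ξ i) ^ p * ((wt α ξ)⁻¹) ^ 2
  have hrm : Measurable r := by unfold r; fun_prop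
  let W : EuclideanSpace ℝ (Fin n) → ℂ := (S N).indicator (fun ξ => (r ξ : ℂ))
  have hWm : Measurable W := (Complex.measurable_ofReal.comp hrm).indicator (hSm N)
  have hWk : ∀ k : ℕ, Integrable (fun v => ‖v‖ ^ k * ‖W v‖) := fun k => by
    have : (fun v => ‖v‖ ^ k * ‖W v‖) = (S N).indicator (fun v => ‖v‖ ^ k * |r v|) := by
      ext v
      by_cases hv : v ∈ S N <;> simp [W, hv]
    rw [this, integrable_indicator_iff (hSm N)]
    refine hbd N _ (by fun_prop) ((N:ℝ) ^ k * ((N:ℝ) ^ p * (N:ℝ) ^ 2)) fun ξ hξ => ?_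
    have a : ‖ξ‖ ≤ N := by simpa using hξ.1
    have b : (wt α ξ)⁻¹ ≤ N := hξ.2
    have c : 0 < (wt α ξ)⁻¹ := inv_pos.2 (hwpos ξ)
    simp only [r, norm_mul, norm_pow, Real.norm_eq_abs, abs_abs, abs_mul, abs_pow, abs_norm,
      abs_of_pos c]
    gcongr
    exact (hco ξ).trans a
  have hWi : Integrable W := by
    have := hWk 0
    simp only [pow_zero, one_mul] at this
    exact (integrable_norm_iff hWm.aestronglyMeasurable).1 this
  have e1 : (fun ξ => (wt α ξ) ^ 2 * ‖W ξ‖ ^ 2) = (S N).indicator g := by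
    ext ξ
    have := (hwpos ξ).ne'
    by_cases hv : ξ ∈ S N
    · simp only [W, hv, Set.indicator_of_mem, Complex.norm_real, Real.norm_eq_abs, sq_abs, r, hg]
      field_simp
      ring
    · simp [W, hv]
  have e2 : (fun v : EuclideanSpace ℝ (Fin n) => (((v i) ^ p : ℝ) : ℂ) * W v) =
      fun v => (((S N).indicator g v : ℝ) : ℂ) := by
    ext ξ
    by_cases hv : ξ ∈ S N
    · simp only [W, hv, Set.indicator_of_mem, r, hg]
      push_cast
      ring
    · simp [W, hv]
  have h1 := aux_deriv (p := p) W hWm (fun k _ => hWk k) i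
  have h2 := H W hWm hWi (by rw [e1]; exact (integrable_indicator_iff (hSm N)).2 (hgi N)) p le_rfl 0
  rw [e1] at h2
  rw [e2, integral_complex_ofReal] at h1
  rw [integral_indicator (hSm N)] at h1 h2
  have h3 := h1.trans h2
  set I := ∫ ξ in S N, g ξ with hI
  have hI0 : 0 ≤ I := integral_nonneg hg0
  rw [Complex.norm_real, Real.norm_of_nonneg hI0] at h3
  have h4 := Real.sq_sqrt hI0
  have h5 := Real.sqrt_nonneg I
  generalize Real.sqrt I = s at *
  rcases h5.eq_or_lt with h | h
  · subst h; rw [← h4]; simp; positivity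
  · have : s ≤ C := by
      rw [← h4] at h3
      nlinarith
    rw [← h4]
    gcongr

lemma aux_norm {n p : ℕ} (hn : 0 < n) (ξ : EuclideanSpace ℝ (Fin n)) :
    ‖ξ‖ ^ (2 * p) ≤ (n:ℝ) ^ p * ∑ i, (ξ i) ^ (2 * p) := by
  haveI : Nonempty (Fin n) := ⟨⟨0, hn⟩⟩
  obtain ⟨j, -, hj⟩ := Finset.exists_max_image Finset.univ (fun i => (ξ i) ^ 2)
    Finset.univ_nonempty
  have h1 : ‖ξ‖ ^ 2 ≤ n * (ξ j) ^ 2 := by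
    rw [EuclideanSpace.real_norm_sq_eq]
    calc ∑ i, (ξ i) ^ 2 ≤ ∑ _i : Fin n, (ξ j) ^ 2 := Finset.sum_le_sum fun i hi => hj i hi
      _ = _ := by simp
  calc ‖ξ‖ ^ (2 * p) = (‖ξ‖ ^ 2) ^ p := pow_mul _ _ _
    _ ≤ (n * (ξ j) ^ 2) ^ p := by gcongr
    _ = (n:ℝ) ^ p * (ξ j) ^ (2 * p) := by rw [mul_pow, ← pow_mul]
    _ ≤ _ := by
      gcongr
      exact Finset.single_le_sum (f := fun i => (ξ i) ^ (2 * p))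
        (fun i _ => (even_two_mul p).pow_nonneg _) (Finset.mem_univ j)

lemma aux_low {α : ℝ → ℝ} (hα : RO α) (R : ℝ) :
    ∃ m > (0:ℝ), ∀ t ∈ Set.Icc 1 R, m ≤ α t := by
  obtain ⟨-, hpos, b, hb, c, hc, H⟩ := hα
  have key : ∀ k : ℕ, ∀ t ∈ Set.Icc 1 (b ^ k), (c⁻¹) ^ k * α 1 ≤ α t := by
    intro k
    induction k with
    | zero =>
      intro t ht
      have : t = 1 := le_antisymm (by simpa using ht.2) ht.1
      simp [this]
    | succ k ih =>
      intro t ht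
      have hc1 : c⁻¹ ≤ 1 := inv_le_one_of_one_le₀ hc
      have hc0 : 0 < c⁻¹ := by positivity
      have h1 := hpos 1 le_rfl
      by_cases htb : t ≤ b
      · have h := (H 1 le_rfl t ⟨ht.1, htb⟩).1
        rw [mul_one, le_div_iff₀ h1] at h
        refine le_trans ?_ h
        have : c⁻¹ ^ (k + 1) ≤ c⁻¹ := by
          rw [pow_succ]
          exact mul_le_of_le_one_left hc0.le (pow_le_one₀ hc0.le hc1)
        gcongr
      · push Not at htb
        have hb0 : 0 < b := by linarith
        have hs : t / b ∈ Set.Icc 1 (b ^ k) := by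
          refine ⟨(one_le_div hb0).2 htb.le, (div_le_iff₀ hb0).2 ?_⟩
          simpa [pow_succ] using ht.2
        have h := (H (t / b) hs.1 b ⟨hb.le, le_rfl⟩).1
        rw [mul_div_cancel₀ _ hb0.ne', le_div_iff₀ (hpos _ hs.1)] at h
        refine le_trans ?_ h
        rw [pow_succ', mul_assoc]
        gcongr
        exact ih _ hs
  obtain ⟨k, hk⟩ := pow_unbounded_of_one_lt R hb
  have := hpos 1 le_rfl
  exact ⟨(c⁻¹) ^ k * α 1, by positivity, fun t ht => key k t ⟨ht.1, ht.2.trans hk.le⟩⟩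

/-- converse to Hörmander's embedding theorem. If `H^α(ℝⁿ)` embeds
continuously into `C^p_b(ℝⁿ)` (on the Fourier side: the `C^p`-seminorms of `w = 𝓕⁻ W` are
uniformly controlled by the `H^α` norm), then `∫₁^∞ t^{2p+n−1} α(t)^{−2} dt < ∞`. -/
theorem hormander_embedding_Cp_converse (n p : ℕ) (hn : 0 < n) (α : ℝ → ℝ) (hα : RO α)
    (hemb : ∃ C > (0:ℝ), ∀ W : EuclideanSpace ℝ (Fin n) → ℂ, Measurable W →
      Integrable W → Integrable (fun ξ => (wt α ξ) ^ 2 * ‖W ξ‖ ^ 2) →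
        ∀ k ≤ p, ∀ x : EuclideanSpace ℝ (Fin n),
          ‖iteratedFDeriv ℝ k (𝓕⁻ W) x‖ ≤
            C * Real.sqrt (∫ ξ, (wt α ξ) ^ 2 * ‖W ξ‖ ^ 2)) :
    IntegrableOn
      (fun t : ℝ => t ^ (2 * (p:ℝ) + n - 1) * ((α t)⁻¹) ^ 2) (Set.Ici 1) := by
  have hlow := aux_low hα
  obtain ⟨hm, hpos, b, hb, c, hc, H⟩ := hα
  haveI : Nonempty (Fin n) := ⟨⟨0, hn⟩⟩
  have hwm : Measurable (fun ξ : EuclideanSpace ℝ (Fin n) => wt α ξ) := by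
    unfold wt; fun_prop
  -- integrability in the whole space
  have h1 : Integrable (fun ξ : EuclideanSpace ℝ (Fin n) =>
      ‖ξ‖ ^ (2 * p) * ((wt α ξ)⁻¹) ^ 2) := by
    have h := (integrable_finsetSum Finset.univ
      (fun i _ => aux_coord α hm hpos hemb i)).const_mul ((n:ℝ) ^ p)
    refine h.mono' (by fun_prop) (ae_of_all _ fun ξ => ?_)
    rw [Real.norm_of_nonneg (by positivity), ← Finset.sum_mul, ← mul_assoc]
    gcongr
    exact aux_norm hn ξ
  -- polar coordinates
  have h2 := (integrable_fun_norm_addHaar (volume : Measure (EuclideanSpace ℝ (Fin n)))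
    (f := fun r : ℝ => r ^ (2 * p) * ((α (Real.sqrt (1 + r ^ 2)))⁻¹) ^ 2)).1 h1
  simp only [finrank_euclideanSpace, Fintype.card_fin, smul_eq_mul] at h2
  have hexp : ∀ t : ℝ, 1 ≤ t → t ^ (2 * (p:ℝ) + n - 1) = t ^ (n - 1) * t ^ (2 * p) := by
    intro t ht
    rw [← pow_add, ← Real.rpow_natCast]
    congr 1
    push_cast [Nat.cast_sub (show 1 ≤ n from hn)]
    ring
  have hfm : Measurable (fun t : ℝ => t ^ (2 * (p:ℝ) + n - 1) * ((α t)⁻¹) ^ 2) := by fun_prop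
  have hb2 : 0 < b ^ 2 - 1 := by nlinarith
  set R : ℝ := max 1 (1 / (b ^ 2 - 1)) with hR
  have hR1 : 1 ≤ R := le_max_left _ _
  rw [← Set.Icc_union_Ici_eq_Ici hR1]
  refine IntegrableOn.union ?_ ?_
  · obtain ⟨m, hm0, hml⟩ := hlow R
    refine IntegrableOn.of_bound (by simp) hfm.aestronglyMeasurable
      (R ^ (n - 1) * R ^ (2 * p) * (m⁻¹) ^ 2)
      ((ae_restrict_iff' measurableSet_Icc).2 (ae_of_all _ fun t ht => ?_))
    have ht0 : 0 ≤ t := by linarith [ht.1]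
    have := hpos t ht.1
    rw [hexp t ht.1, Real.norm_of_nonneg (by positivity)]
    have h3 := ht.2
    have h4 := hml t ht
    gcongr
  · have h3 := (h2.mono_set (s := Set.Ici R)
      (fun t ht => lt_of_lt_of_le (by linarith) (Set.mem_Ici.1 ht))).const_mul (c ^ 2)
    refine Integrable.mono' h3 hfm.aestronglyMeasurable
      ((ae_restrict_iff' measurableSet_Ici).2 (ae_of_all _ fun t ht => ?_))
    have htR : R ≤ t := ht
    have ht1 : 1 ≤ t := hR1.trans htR
    have ht0 : 0 < t := by linarith
    have htb : 1 / (b ^ 2 - 1) ≤ t := (le_max_right _ _).trans htR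
    rw [div_le_iff₀ hb2] at htb
    set s := Real.sqrt (1 + t ^ 2) with hs
    have hs1 : t ≤ s := Real.le_sqrt_of_sq_le (by linarith)
    have hs2 : s ≤ b * t := by
      apply Real.sqrt_le_iff.2 ⟨by positivity, by nlinarith⟩
    have h := (H t ht1 (s / t) ⟨(one_le_div ht0).2 hs1, (div_le_iff₀ ht0).2 hs2⟩).2
    rw [div_mul_cancel₀ _ ht0.ne', div_le_iff₀ (hpos t ht1)] at h
    have hps := hpos s (ht1.trans hs1)
    have hpt := hpos t ht1
    have h5 : (α t)⁻¹ ≤ c * (α s)⁻¹ := by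
      rw [← div_eq_mul_inv, le_div_iff₀ hps, inv_mul_le_iff₀ hpt]
      linarith
    rw [hexp t ht1, Real.norm_of_nonneg (by positivity)]
    calc t ^ (n - 1) * t ^ (2 * p) * (α t)⁻¹ ^ 2
        ≤ t ^ (n - 1) * t ^ (2 * p) * (c * (α s)⁻¹) ^ 2 := by gcongr
      _ = _ := by ring
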